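/- arXiv:0711.1402 — 2 statements merged into one kernel-verified Lean document; each statement's English description precedes it below -/
import Mathlib

section
/- Let H be a weak bialgebra over a field k such that H_t ∩ H_s = k·1 (the intersection of the base algebras is the line spanned by the unit). Regard H_s as a right H-comodule via the restriction of Δ. Then every endomorphism f of the right H-comodule H_s is a scalar multiple of the identity: f = c·id_{H_s}, where c ∈ k is determined by f(1) = c·1. -/
/-!
Write `Δ(1) = 1₁ ⊗ 1₂`. By coassociativity and (WBA3), an element `x = φ(1₁)1₂`, with `φ` any
functional, satisfies `Δ(x) = 1₁x ⊗ 1₂`; this equation characterises `H_t`. If `f` is a comodule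
endomorphism of `H_s`, then `Δ(f(1)) = f(1₁) ⊗ 1₂`, and applying `ε` to the left leg exhibits
`f(1) = ε(f(1₁))1₂` as an element of `H_t`. Hence `f(1₁) ⊗ 1₂ = 1₁f(1) ⊗ 1₂`. Every element of
`H_s` is of the form `1₁ε(y1₂)`, so contracting the right leg with `ε(y ·)` shows that `f` is right
multiplication by `f(1) ∈ H_t ∩ H_s`.
-/

open scoped TensorProduct
open TensorProduct LinearMap

/-- A weak bialgebra over a field `k`: an algebra and coalgebra subject to the
weak compatibility axioms (WBA1)-(WBA3). -/
class WeakBialgebra (k H : Type*) [Field k] [Ring H] [Algebra k H]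
    extends Coalgebra k H where
  /-- (WBA1): `Δ(xy) = Δ(x)Δ(y)`. -/
  comul_mul : ∀ x y : H,
    Coalgebra.comul (R := k) (x * y) = Coalgebra.comul (R := k) x * Coalgebra.comul (R := k) y
  /-- (WBA2): `ε(xyz) = Σ ε(xy⁽¹⁾)ε(y⁽²⁾z)`. -/
  counit_mul_mul : ∀ x y z : H,
    Coalgebra.counit (R := k) (x * y * z) =
      TensorProduct.lid k k
        ((TensorProduct.map (Coalgebra.counit ∘ₗ LinearMap.mulLeft k x)
            (Coalgebra.counit ∘ₗ LinearMap.mulRight k z))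
          (Coalgebra.comul (R := k) y))
  /-- (WBA2'): `ε(xyz) = Σ ε(xy⁽²⁾)ε(y⁽¹⁾z)`. -/
  counit_mul_mul' : ∀ x y z : H,
    Coalgebra.counit (R := k) (x * y * z) =
      TensorProduct.lid k k
        ((TensorProduct.map (Coalgebra.counit ∘ₗ LinearMap.mulRight k z)
            (Coalgebra.counit ∘ₗ LinearMap.mulLeft k x))
          (Coalgebra.comul (R := k) y))
  /-- (WBA3): `((Δ⊗id)∘Δ)(1) = (Δ(1)⊗1)·(1⊗Δ(1))`. -/
  comul_comul_one :
    (TensorProduct.map (Coalgebra.comul (R := k)) (LinearMap.id (M := H)))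
        (Coalgebra.comul (R := k) (1 : H)) =
      (Coalgebra.comul (R := k) (1 : H) ⊗ₜ[k] (1 : H)) *
        ((TensorProduct.assoc k H H H).symm ((1 : H) ⊗ₜ[k] Coalgebra.comul (R := k) (1 : H)))
  /-- (WBA3'): `((Δ⊗id)∘Δ)(1) = (1⊗Δ(1))·(Δ(1)⊗1)`. -/
  comul_comul_one' :
    (TensorProduct.map (Coalgebra.comul (R := k)) (LinearMap.id (M := H)))
        (Coalgebra.comul (R := k) (1 : H)) =
      ((TensorProduct.assoc k H H H).symm ((1 : H) ⊗ₜ[k] Coalgebra.comul (R := k) (1 : H))) *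
        (Coalgebra.comul (R := k) (1 : H) ⊗ₜ[k] (1 : H))

variable (k H : Type*) [Field k] [Ring H] [Algebra k H]

/-- The target counital map `ε_t(x) = Σ ε(1⁽¹⁾x)·1⁽²⁾`. -/
noncomputable def εt [WeakBialgebra k H] : H →ₗ[k] H :=
  (TensorProduct.lid k H).toLinearMap ∘ₗ
    (LinearMap.rTensor H (Coalgebra.counit (R := k) (A := H))) ∘ₗ
    (LinearMap.mulLeft k (Coalgebra.comul (R := k) (1 : H))) ∘ₗ
    ((TensorProduct.mk k H H).flip 1)

/-- The source counital map `ε_s(x) = Σ 1⁽¹⁾·ε(x1⁽²⁾)`. -/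
noncomputable def εs [WeakBialgebra k H] : H →ₗ[k] H :=
  (TensorProduct.rid k H).toLinearMap ∘ₗ
    (LinearMap.lTensor H (Coalgebra.counit (R := k) (A := H))) ∘ₗ
    (LinearMap.mulRight k (Coalgebra.comul (R := k) (1 : H))) ∘ₗ
    (TensorProduct.mk k H H 1)

/-- The target base algebra `H_t = ε_t(H)`. -/
noncomputable def Ht [WeakBialgebra k H] : Submodule k H := LinearMap.range (εt k H)

/-- The source base algebra `H_s = ε_s(H)`. -/
noncomputable def Hs [WeakBialgebra k H] : Submodule k H := LinearMap.range (εs k H)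

section Contraction

variable {R M N A B C D : Type*} [CommSemiring R] [AddCommMonoid M] [Module R M]
  [AddCommMonoid N] [Module R N] [Semiring A] [Algebra R A] [Semiring B] [Algebra R B]
  [Semiring C] [Algebra R C] [AddCommMonoid D] [Module R D]

theorem map_lid_rTensor (g : M →ₗ[R] N) (φ : D →ₗ[R] R) (t : D ⊗[R] M) :
    g (TensorProduct.lid R M (rTensor M φ t)) =
      TensorProduct.lid R N (rTensor N φ (lTensor D g t)) := by
  induction t with
  | zero => simp
  | add s t hs ht => simp only [map_add, hs, ht]
  | tmul d m => simp

theorem rid_lTensor_rTensor (g : M →ₗ[R] N) (φ : D →ₗ[R] R) (t : M ⊗[R] D) :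
    TensorProduct.rid R N (lTensor N φ (rTensor D g t)) =
      g (TensorProduct.rid R M (lTensor M φ t)) := by
  induction t with
  | zero => simp
  | add s t hs ht => simp only [map_add, hs, ht]
  | tmul m d => simp

theorem rid_lTensor_mul_tmul_one (φ : B →ₗ[R] R) (t : A ⊗[R] B) (a : A) :
    TensorProduct.rid R A (lTensor A φ (t * a ⊗ₜ[R] 1)) =
      TensorProduct.rid R A (lTensor A φ t) * a := by
  induction t with
  | zero => simp
  | add s t hs ht => simp only [add_mul, map_add, hs, ht]
  | tmul b d => simp

theorem lid_rTensor_assoc_one_tmul_mul_tmul_one (φ : A →ₗ[R] R) (s : B ⊗[R] C) (t : A ⊗[R] B) :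
    TensorProduct.lid R (B ⊗[R] C) (rTensor (B ⊗[R] C) φ (TensorProduct.assoc R A B C
        ((TensorProduct.assoc R A B C).symm (1 ⊗ₜ[R] s) * t ⊗ₜ[R] 1))) =
      s * TensorProduct.lid R B (rTensor B φ t) ⊗ₜ[R] 1 := by
  induction s with
  | zero => simp
  | add s s' hs hs' => simp only [tmul_add, map_add, add_mul, hs, hs']
  | tmul b c =>
    induction t with
    | zero => simp
    | add t t' ht ht' => simp only [add_tmul, map_add, mul_add, ht, ht']
    | tmul a b' => simp [smul_tmul']

end Contraction

namespace WeakBialgebra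

open Coalgebra

variable {k H} [WeakBialgebra k H]

theorem εt_apply (x : H) :
    εt k H x = TensorProduct.lid k H (rTensor H counit (comul (R := k) (1 : H) * x ⊗ₜ[k] 1)) :=
  rfl

theorem εt_eq_lid_rTensor (x : H) :
    εt k H x =
      TensorProduct.lid k H (rTensor H (counit ∘ₗ mulRight k x) (comul (R := k) (1 : H))) := by
  rw [εt_apply]
  induction comul (R := k) (1 : H) with
  | zero => simp
  | add s t hs ht => simp only [add_mul, map_add, hs, ht]
  | tmul a b => simp

theorem εs_eq_rid_lTensor (y : H) :
    εs k H y =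
      TensorProduct.rid k H (lTensor H (counit ∘ₗ mulLeft k y) (comul (R := k) (1 : H))) := by
  change TensorProduct.rid k H (lTensor H counit (1 ⊗ₜ[k] y * comul (R := k) (1 : H))) = _
  induction comul (R := k) (1 : H) with
  | zero => simp
  | add s t hs ht => simp only [mul_add, map_add, hs, ht]
  | tmul a b => simp

variable (k H) in
theorem one_mem_Hs : (1 : H) ∈ Hs k H :=
  ⟨1, by rw [εs_eq_rid_lTensor, mulLeft_one, comp_id, lTensor_counit_comul, rid_tmul, one_smul]⟩

variable (k H) in
theorem rTensor_comul_comul_one :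
    rTensor H (comul (R := k)) (comul (R := k) (1 : H)) =
      (TensorProduct.assoc k H H H).symm (1 ⊗ₜ[k] comul (R := k) (1 : H)) *
        comul (R := k) (1 : H) ⊗ₜ[k] 1 :=
  comul_comul_one'

theorem comul_lid_rTensor_comul_one (φ : H →ₗ[k] k) :
    comul (R := k) (TensorProduct.lid k H (rTensor H φ (comul (R := k) (1 : H)))) =
      comul (R := k) (1 : H) *
        TensorProduct.lid k H (rTensor H φ (comul (R := k) (1 : H))) ⊗ₜ[k] 1 := by
  rw [map_lid_rTensor, ← coassoc_apply, rTensor_comul_comul_one,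
    lid_rTensor_assoc_one_tmul_mul_tmul_one]

theorem mem_Ht_iff_comul_eq {x : H} :
    x ∈ Ht k H ↔ comul (R := k) x = comul (R := k) (1 : H) * x ⊗ₜ[k] 1 := by
  constructor
  · rintro ⟨y, rfl⟩
    rw [εt_eq_lid_rTensor, comul_lid_rTensor_comul_one]
  · intro hx
    exact ⟨x, by rw [εt_apply, ← hx, rTensor_counit_comul, lid_tmul, one_smul]⟩

theorem lid_rTensor_comul_one_mem_Ht (φ : H →ₗ[k] k) :
    TensorProduct.lid k H (rTensor H φ (comul (R := k) (1 : H))) ∈ Ht k H :=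
  mem_Ht_iff_comul_eq.2 (comul_lid_rTensor_comul_one φ)

theorem apply_one_mem_Ht {g : H →ₗ[k] H}
    (hg : rTensor H g (comul (R := k) (1 : H)) = comul (R := k) (g 1)) : g 1 ∈ Ht k H := by
  have contraction : TensorProduct.lid k H
      (rTensor H (counit ∘ₗ g) (comul (R := k) (1 : H))) = g 1 := by
    rw [rTensor_comp_apply, hg, rTensor_counit_comul, lid_tmul, one_smul]
  exact contraction ▸ lid_rTensor_comul_one_mem_Ht (counit ∘ₗ g)

theorem apply_eq_mul_apply_one {g : H →ₗ[k] H}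
    (hg : rTensor H g (comul (R := k) (1 : H)) = comul (R := k) (g 1)) {x : H}
    (hx : x ∈ Hs k H) : g x = x * g 1 := by
  obtain ⟨y, rfl⟩ := hx
  rw [εs_eq_rid_lTensor, ← rid_lTensor_rTensor, hg,
    mem_Ht_iff_comul_eq.1 (apply_one_mem_Ht hg), rid_lTensor_mul_tmul_one]

end WeakBialgebra

theorem endomorphism_of_sourceBase_scalar_general [WeakBialgebra k H]
    (βs : ↥(Hs k H) →ₗ[k] ↥(Hs k H) ⊗[k] H)
    (hβs : ∀ x : ↥(Hs k H),
      (LinearMap.rTensor H (Hs k H).subtype) (βs x) = Coalgebra.comul (R := k) (x : H))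
    (f : ↥(Hs k H) →ₗ[k] ↥(Hs k H))
    (hf : ∀ x : ↥(Hs k H), (LinearMap.rTensor H f) (βs x) = βs (f x)) :
    ∃ u ∈ Ht k H ⊓ Hs k H, ∀ x : ↥(Hs k H), (f x : H) = x * u := by
  -- `Δ(1)` lives in `H ⊗ H`, so `f` has to be extended to act on its left leg.
  obtain ⟨g, hgf⟩ := LinearMap.exists_extend ((Hs k H).subtype ∘ₗ f)
  have g_coe (x : Hs k H) : g x = f x := LinearMap.congr_fun hgf x
  let e : Hs k H := ⟨1, WeakBialgebra.one_mem_Hs k H⟩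
  have colinear_one : rTensor H g (Coalgebra.comul (R := k) (1 : H)) =
      Coalgebra.comul (R := k) (g 1) :=
    calc rTensor H g (Coalgebra.comul (R := k) (1 : H))
      _ = rTensor H (g ∘ₗ (Hs k H).subtype) (βs e) := by rw [rTensor_comp_apply, hβs]
      _ = rTensor H (Hs k H).subtype (βs (f e)) := by rw [hgf, rTensor_comp_apply, hf]
      _ = Coalgebra.comul (R := k) (g 1) := by rw [hβs, ← g_coe]
  refine ⟨g 1, ⟨WeakBialgebra.apply_one_mem_Ht colinear_one, g_coe e ▸ (f e).2⟩, fun x => ?_⟩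
  rw [← g_coe, WeakBialgebra.apply_eq_mul_apply_one colinear_one x.2]

/-- Let `H` be a weak bialgebra over a field `k` with
`H_t ∩ H_s = k·1`. Then every endomorphism of the right `H`-comodule `H_s`
(with coaction `βs` the restriction of `Δ`) is a scalar multiple of the identity,
the scalar being determined by `f(1) = c·1`. -/
theorem endomorphism_of_sourceBase_scalar [WeakBialgebra k H]
    (hbase : Ht k H ⊓ Hs k H = Submodule.span k {(1 : H)})
    (βs : ↥(Hs k H) →ₗ[k] ↥(Hs k H) ⊗[k] H)
    (hβs : ∀ x : ↥(Hs k H),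
      (LinearMap.rTensor H (Hs k H).subtype) (βs x) = Coalgebra.comul (R := k) (x : H))
    (f : ↥(Hs k H) →ₗ[k] ↥(Hs k H))
    (hf : ∀ x : ↥(Hs k H), (LinearMap.rTensor H f) (βs x) = βs (f x)) :
    ∃ c : k, (∀ x : ↥(Hs k H), f x = c • x) ∧
      ∀ h1 : (1 : H) ∈ Hs k H, ((f ⟨1, h1⟩ : ↥(Hs k H)) : H) = c • (1 : H) := by
  obtain ⟨u, hu, hfu⟩ := endomorphism_of_sourceBase_scalar_general k H βs hβs f hf
  obtain ⟨c, rfl⟩ := Submodule.mem_span_singleton.1 (hbase ▸ hu)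
  exact ⟨c, fun x => Subtype.ext (by simp [hfu]), fun h1 => by simp [hfu]⟩
end

section
/- Let C be a coassociative counital coalgebra over a field k and let (V, β_V) be an irreducible right C-comodule, i.e. V ≠ 0 and the only subspaces W ⊆ V with β_V(W) ⊆ W⊗C are 0 and V. Then V is finite-dimensional as a k-vector space. -/
open scoped TensorProduct
open TensorProduct LinearMap

/-!
Call `(id ⊗ f) x`, for a functional `f` on `C`, a slice of `x ∈ V ⊗ C`. When `C` is projective, a
dual basis writes `x` as a finite sum `∑ vᵢ ⊗ cᵢ` in which the `vᵢ` are themselves slices of `x`, so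
the slices of `x` form a finitely generated submodule `S` with `x ∈ S ⊗ C`.
For `x = β v`, coassociativity gives `β ((id ⊗ f) (β v)) = (id ⊗ g) (β v)` with
`g = (id ⊗ f) ∘ Δ`, hence `β` maps `S` into `S ⊗ C`. Therefore `⟨v⟩ + S` is a finitely generated
subcomodule containing `v`, and irreducibility makes it everything as soon as `v ≠ 0`.
-/

section Slice

variable {R U V C D : Type*} [CommSemiring R] [AddCommMonoid U] [Module R U]
  [AddCommMonoid V] [Module R V] [AddCommMonoid C] [Module R C] [AddCommMonoid D] [Module R D]

/-- The slice map: `rightSlice x f` is `(id ⊗ f) x`, read in `V` through `V ⊗ R ≃ V`. -/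
def rightSlice : V ⊗[R] C →ₗ[R] Module.Dual R C →ₗ[R] V :=
  (lTensorHom V).flip.compr₂ (TensorProduct.rid R V).toLinearMap

@[simp]
lemma rightSlice_tmul (v : V) (c : C) (f : Module.Dual R C) :
    rightSlice (v ⊗ₜ[R] c) f = f c • v := by
  simp [rightSlice]

lemma rightSlice_rTensor (φ : V →ₗ[R] U) (x : V ⊗[R] C) (f : Module.Dual R C) :
    rightSlice (rTensor C φ x) f = φ (rightSlice x f) := by
  induction x with
  | zero => simp
  | tmul v c => simp
  | add x y hx hy => simp only [map_add, LinearMap.add_apply, hx, hy]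

lemma lTensor_rightSlice_assoc (z : (V ⊗[R] D) ⊗[R] C) (f : Module.Dual R C) :
    lTensor V (rightSlice.flip f) (TensorProduct.assoc R V D C z) = rightSlice z f := by
  suffices h : lTensor V (rightSlice.flip f) ∘ₗ (TensorProduct.assoc R V D C).toLinearMap =
      rightSlice.flip f from LinearMap.congr_fun h z
  ext v d c
  simp

/-- The slices of `x`. When `C` is projective, this is the smallest `S` with `x ∈ S ⊗ C`. -/
def sliceSubmodule (x : V ⊗[R] C) : Submodule R V :=
  range (rightSlice x)

lemma exists_finsupp_sum_tmul_eq [Module.Projective R C] (x : V ⊗[R] C) :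
    ∃ y : C →₀ V, (∀ c, y c ∈ sliceSubmodule x) ∧ (y.sum fun c v ↦ v ⊗ₜ[R] c) = x := by
  classical
  obtain ⟨s, hs⟩ := Module.projective_def'.1 ‹Module.Projective R C›
  let e : V ⊗[R] C →ₗ[R] C →₀ V :=
    (finsuppScalarRight R R V C).toLinearMap ∘ₗ lTensor V s
  have he (c : C) : Finsupp.lapply c ∘ₗ e = rightSlice.flip (Finsupp.lapply c ∘ₗ s) := by
    ext v d
    simp [e]
  have hsum : Finsupp.lsum R (fun c ↦ (TensorProduct.mk R V C).flip c) ∘ₗ e = LinearMap.id := by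
    ext v d
    have hd : ((s d).sum fun c r ↦ r • c) = d := LinearMap.congr_fun hs d
    calc (Finsupp.lsum R (fun c ↦ (TensorProduct.mk R V C).flip c)) (e (v ⊗ₜ[R] d))
        = (s d).sum fun c r ↦ r • v ⊗ₜ[R] c := by
          simp [e, finsuppScalarRight_apply_tmul, map_finsuppSum]
      _ = v ⊗ₜ[R] (s d).sum fun c r ↦ r • c := by
          simp only [Finsupp.sum, tmul_sum, tmul_smul]
      _ = v ⊗ₜ[R] d := by rw [hd]
  exact ⟨e x, fun c ↦ ⟨_, (LinearMap.congr_fun (he c) x).symm⟩, LinearMap.congr_fun hsum x⟩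

lemma sliceSubmodule_fg [Module.Projective R C] (x : V ⊗[R] C) : (sliceSubmodule x).FG := by
  classical
  obtain ⟨y, hy, hyx⟩ := exists_finsupp_sum_tmul_eq x
  refine ⟨y.support.image y, le_antisymm (Submodule.span_le.2 ?_) ?_⟩
  · simpa [Set.subset_def] using fun c _ ↦ hy c
  · rintro _ ⟨f, rfl⟩
    have hf : rightSlice x f = ∑ c ∈ y.support, f c • y c := by
      simp [← hyx, Finsupp.sum]
    rw [hf]
    exact Submodule.sum_mem _ fun c hc ↦
      Submodule.smul_mem _ _ (Submodule.subset_span (Finset.mem_image_of_mem y hc))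

lemma mem_range_rTensor_sliceSubmodule [Module.Projective R C] (x : V ⊗[R] C) :
    x ∈ range (rTensor C (sliceSubmodule x).subtype) := by
  obtain ⟨y, hy, hyx⟩ := exists_finsupp_sum_tmul_eq x
  have hsum : (y.sum fun c v ↦ v ⊗ₜ[R] c) ∈ range (rTensor C (sliceSubmodule x).subtype) :=
    Submodule.sum_mem _ fun c _ ↦ ⟨⟨y c, hy c⟩ ⊗ₜ[R] c, rfl⟩
  rwa [hyx] at hsum

lemma lTensor_mem_range_rTensor {φ : U →ₗ[R] V} {x : V ⊗[R] C} (hx : x ∈ range (rTensor C φ))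
    (g : C →ₗ[R] D) : lTensor V g x ∈ range (rTensor D φ) := by
  obtain ⟨z, rfl⟩ := hx
  refine ⟨lTensor U g z, ?_⟩
  rw [← LinearMap.comp_apply, rTensor_comp_lTensor, ← lTensor_comp_rTensor, LinearMap.comp_apply]

lemma range_rTensor_subtype_mono {W W' : Submodule R V} (h : W ≤ W') :
    range (rTensor C W.subtype) ≤ range (rTensor C W'.subtype) := by
  rw [← Submodule.subtype_comp_inclusion W W' h, rTensor_comp]
  exact range_comp_le_range _ _

end Slice

section Subcomodule

variable {R C V : Type*} [CommSemiring R] [AddCommMonoid C] [Module R C]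
  [AddCommMonoid V] [Module R V]

/-- `W` is a subcomodule for the coaction `β`: `β W ⊆ W ⊗ C`, where `W ⊗ C` stands for its image in
`V ⊗ C`. -/
def IsSubcomodule (β : V →ₗ[R] V ⊗[R] C) (W : Submodule R V) : Prop :=
  ∀ w ∈ W, β w ∈ range (rTensor C W.subtype)

variable [Module.Projective R C] {δ : C →ₗ[R] C ⊗[R] C} {β : V →ₗ[R] V ⊗[R] C}

lemma isSubcomodule_span_singleton_sup_sliceSubmodule
    (hβ : ∀ v, TensorProduct.assoc R V C C (rTensor C β (β v)) = lTensor V δ (β v)) (v : V) :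
    IsSubcomodule β (Submodule.span R {v} ⊔ sliceSubmodule (β v)) := by
  set W := Submodule.span R {v} ⊔ sliceSubmodule (β v)
  have hβv : β v ∈ range (rTensor C W.subtype) :=
    range_rTensor_subtype_mono le_sup_right (mem_range_rTensor_sliceSubmodule (β v))
  suffices h : W ≤ (range (rTensor C W.subtype)).comap β from h
  refine sup_le ((Submodule.span_singleton_le_iff_mem _ _).2 hβv) ?_
  rintro _ ⟨f, rfl⟩
  have hslice : β (rightSlice (β v) f) = lTensor V (rightSlice.flip f ∘ₗ δ) (β v) := by
    rw [← rightSlice_rTensor, ← lTensor_rightSlice_assoc, hβ, lTensor_comp_apply]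
  rw [Submodule.mem_comap, hslice]
  exact lTensor_mem_range_rTensor hβv _

lemma exists_fg_isSubcomodule_mem
    (hβ : ∀ v, TensorProduct.assoc R V C C (rTensor C β (β v)) = lTensor V δ (β v)) (v : V) :
    ∃ W : Submodule R V, W.FG ∧ IsSubcomodule β W ∧ v ∈ W :=
  ⟨_, (Submodule.fg_span_singleton v).sup (sliceSubmodule_fg (β v)),
    isSubcomodule_span_singleton_sup_sliceSubmodule hβ v,
    Submodule.mem_sup_left (Submodule.mem_span_singleton_self v)⟩

theorem irreducible_comodule_finiteDimensional_general
    (hβ : ∀ v, TensorProduct.assoc R V C C (rTensor C β (β v)) = lTensor V δ (β v))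
    (hirr : ∀ W : Submodule R V, IsSubcomodule β W → W = ⊥ ∨ W = ⊤) :
    Module.Finite R V := by
  cases subsingleton_or_nontrivial V
  · infer_instance
  obtain ⟨v, hv⟩ := exists_ne (0 : V)
  obtain ⟨W, hfg, hW, hvW⟩ := exists_fg_isSubcomodule_mem hβ v
  have hbot : W ≠ ⊥ := (Submodule.ne_bot_iff W).2 ⟨v, hvW, hv⟩
  have htop : W = ⊤ := (hirr W hW).resolve_left hbot
  exact ⟨htop ▸ hfg⟩

end Subcomodule

/-- Let `C` be a coalgebra over a field `k` and `(V, β)` an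
irreducible right `C`-comodule (i.e. `V ≠ 0` and the only subspaces `W ⊆ V` with
`β(W) ⊆ W ⊗ C` are `0` and `V`). Then `V` is finite-dimensional over `k`. -/
theorem irreducible_comodule_finiteDimensional
    {k C : Type*} [Field k] [AddCommGroup C] [Module k C] [Coalgebra k C]
    {V : Type*} [AddCommGroup V] [Module k V]
    (β : V →ₗ[k] V ⊗[k] C)
    (hβ1 : ∀ v : V,
      TensorProduct.rid k V
        ((LinearMap.lTensor V (Coalgebra.counit (R := k) (A := C))) (β v)) = v)
    (hβ2 : ∀ v : V,
      (TensorProduct.assoc k V C C) ((LinearMap.rTensor C β) (β v)) =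
        (LinearMap.lTensor V (Coalgebra.comul (R := k) (A := C))) (β v))
    (hne : ∃ v : V, v ≠ 0)
    (hirr : ∀ W : Submodule k V,
      (∀ w ∈ W, β w ∈ LinearMap.range (LinearMap.rTensor C W.subtype)) →
        W = ⊥ ∨ W = ⊤) :
    FiniteDimensional k V :=
  irreducible_comodule_finiteDimensional_general hβ2 hirr
end
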